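/- Let v: [0,s]_ℤ → ℝ₊ be M♮-concave, and for a price p let D(p) := argmax_{x ∈ [0,s]_ℤ} (v(x) − Σ_j q_j(p_j) x_j) with minimal elements Ď(p), where each q_j: ℝ₊ → ℝ₊ is continuous and strictly increasing. Let p ≤ p'. Then for any x ∈ Ď(p) there exists x' ∈ Ď(p') such that x_j ≤ x'_j for all j with p_j = p'_j, and x(M) ≥ x'(M). -/

import Mathlib

open Finset

/-!
Work with the effective unit prices `c j = q j (p j)` and `c' j = q j (p' j)`. By optimality, an
exchange `(x, y) ↦ (x - d, y + d)` that does not lower the total value of bundles `x` demanded at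
`c` and `y` demanded at `c'` preserves both demands as soon as `d` does not cost more at `c'` than
at `c`. Moving one unit of a good (Murota–Shioura) from a larger bundle demanded at the higher
prices to a smaller one demanded at the lower prices thus contradicts the minimality of the former,
which is the law of aggregate demand. Among the minimal demanded bundles at `c'`, one closest to `x`
satisfies the gross substitutes condition: an exchange at a violating good with unchanged price
would either shrink `x` or bring the other bundle closer to it.
-/

section MNatConcave

variable {M R : Type*} [Add R] [LE R]

/-- An exchange for `v` on the domain `S`: transferring `d` from `x` to `y` stays within `S` and
does not lower the total value. -/
structure IsExchange (S : Set (M → ℤ)) (v : (M → ℤ) → R) (x y d : M → ℤ) : Prop where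
  sub_mem : x - d ∈ S
  add_mem : y + d ∈ S
  add_le : v x + v y ≤ v (x - d) + v (y + d)

lemma isExchange_Icc_of_mem_uIcc {a b x y d : M → ℤ} {v : (M → ℤ) → R}
    (hx : x ∈ Set.Icc a b) (hy : y ∈ Set.Icc a b) (hd : d ∈ Set.uIcc 0 (x - y))
    (h : v x + v y ≤ v (x - d) + v (y + d)) : IsExchange (Set.Icc a b) v x y d := by
  have hxd : x - d ∈ Set.uIcc x y :=
    ⟨by simpa [sub_eq_add_neg, add_inf, neg_sup] using sub_le_sub_left hd.2 x,
      by simpa [sub_eq_add_neg, add_sup, neg_inf] using sub_le_sub_left hd.1 x⟩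
  have hyd : y + d ∈ Set.uIcc y x :=
    ⟨by simpa [add_inf] using add_le_add_right hd.1 y,
      by simpa [add_sup] using add_le_add_right hd.2 y⟩
  exact ⟨Set.uIcc_subset_Icc hx hy hxd, Set.uIcc_subset_Icc hy hx hyd, h⟩

variable [DecidableEq M]

/-- M♮-concavity of the function that is `v` on `S` and `-∞` elsewhere. The first alternative is
the exchange with the dummy good `k = 0`. -/
def MNatConcaveOn (S : Set (M → ℤ)) (v : (M → ℤ) → R) : Prop :=
  ∀ x ∈ S, ∀ y ∈ S, ∀ j, y j < x j →
    IsExchange S v x y (Pi.single j 1) ∨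
      ∃ k, x k < y k ∧ IsExchange S v x y (Pi.single j 1 - Pi.single k 1)

lemma single_one_le_zero_sup {z : M → ℤ} {j : M} (hj : 0 < z j) : Pi.single j 1 ≤ 0 ⊔ z := by
  intro i
  rcases eq_or_ne i j with rfl | hij
  · simpa using Int.add_one_le_of_lt hj
  · simp [hij]

lemma single_mem_uIcc_zero {z : M → ℤ} {j : M} (hj : 0 < z j) :
    Pi.single j 1 ∈ Set.uIcc 0 z :=
  ⟨inf_le_left.trans (Pi.single_nonneg.2 zero_le_one), single_one_le_zero_sup hj⟩

lemma single_sub_single_mem_uIcc_zero {z : M → ℤ} {j k : M} (hj : 0 < z j) (hk : z k < 0) :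
    Pi.single j 1 - Pi.single k 1 ∈ Set.uIcc 0 z := by
  have hneg : 0 ⊓ z ≤ -Pi.single k 1 := by
    simpa [neg_sup] using neg_le_neg (single_one_le_zero_sup (z := -z) (neg_pos.2 hk))
  constructor
  · exact hneg.trans (by simp [sub_eq_add_neg])
  · exact (sub_le_self _ (Pi.single_nonneg.2 zero_le_one)).trans (single_one_le_zero_sup hj)

lemma mNatConcaveOn_Icc {a b : M → ℤ} {v : (M → ℤ) → R}
    (h : ∀ x ∈ Set.Icc a b, ∀ y ∈ Set.Icc a b, ∀ j, y j < x j →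
      v x + v y ≤ v (x - Pi.single j 1) + v (y + Pi.single j 1) ∨
        ∃ k, x k < y k ∧ v x + v y ≤
          v (x - Pi.single j 1 + Pi.single k 1) + v (y + Pi.single j 1 - Pi.single k 1)) :
    MNatConcaveOn (Set.Icc a b) v := by
  simp only [sub_add, add_sub_assoc] at h
  intro x hx y hy j hj
  refine (h x hx y hy j hj).imp (fun hle ↦ ?_) fun ⟨k, hk, hle⟩ ↦ ⟨k, hk, ?_⟩
  · exact isExchange_Icc_of_mem_uIcc hx hy (single_mem_uIcc_zero (sub_pos.2 hj)) hle
  · exact isExchange_Icc_of_mem_uIcc hx hy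
      (single_sub_single_mem_uIcc_zero (sub_pos.2 hj) (sub_neg.2 hk)) hle

end MNatConcave

section Excess

variable {M : Type*} [Fintype M]

/-- The size of the positive part of `z`; the decreasing measure of the exchange arguments, where
`excess (x - y)` tells how far `y` is from dominating `x`. -/
def excess (z : M → ℤ) : ℕ := ∑ i, (z i).toNat

variable [DecidableEq M]

lemma excess_sub_lt {z : M → ℤ} {j k : M} (hj : 0 < z j) (hk : z k < 0) :
    excess (z - (Pi.single j 1 - Pi.single k 1)) < excess z := by
  have hjk : j ≠ k := by rintro rfl; exact lt_asymm hj hk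
  refine sum_lt_sum (fun i _ ↦ ?_) ⟨j, mem_univ j, ?_⟩
  · simp only [Pi.sub_apply, Pi.single_apply]
    split_ifs <;> subst_vars <;> omega
  · simp only [Pi.sub_apply, Pi.single_eq_same, Pi.single_eq_of_ne hjk]
    omega

lemma sum_sub_single_sub_single (z : M → ℤ) (j k : M) :
    ∑ i, (z - (Pi.single j 1 - Pi.single k 1) : M → ℤ) i = ∑ i, z i := by
  simp [sum_sub_distrib]

lemma sum_add_single_sub_single (z : M → ℤ) (j k : M) :
    ∑ i, (z + (Pi.single j 1 - Pi.single k 1) : M → ℤ) i = ∑ i, z i := by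
  simp [sum_add_distrib]

end Excess

section Demand

variable {M R : Type*} [Fintype M] [CommRing R]

/-- The cost of a bundle at unit prices `c`. -/
def cost (c : M → R) : (M → ℤ) →+ R where
  toFun x := ∑ j, c j * (x j : R)
  map_zero' := by simp
  map_add' x y := by simp [mul_add, sum_add_distrib]

lemma cost_single [DecidableEq M] (c : M → R) (j : M) : cost c (Pi.single j 1) = c j := by
  simp [cost, Pi.single_apply]

variable [LinearOrder R] {S : Set (M → ℤ)} {v : (M → ℤ) → R} {c c' : M → R} {x y d : M → ℤ}

/-- The demand set at unit prices `c`: the bundles in `S` of maximal utility `v - cost c`. -/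
def demand (S : Set (M → ℤ)) (v : (M → ℤ) → R) (c : M → R) : Set (M → ℤ) :=
  {x ∈ S | ∀ y ∈ S, v y - cost c y ≤ v x - cost c x}

lemma exists_minimal_mem_demand (hS : S.Finite) (hne : S.Nonempty) (v : (M → ℤ) → R)
    (c : M → R) : ∃ x, Minimal (· ∈ demand S v c) x := by
  obtain ⟨x, hxS, hx⟩ := Set.exists_max_image S (fun y ↦ v y - cost c y) hS hne
  exact (hS.subset (Set.sep_subset _ _)).exists_minimal ⟨x, hxS, hx⟩

variable [IsStrictOrderedRing R]

lemma IsExchange.mem_demand (h : IsExchange S v x y d) (hx : x ∈ demand S v c)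
    (hy : y ∈ demand S v c') (hd : cost c' d ≤ cost c d) :
    x - d ∈ demand S v c ∧ y + d ∈ demand S v c' := by
  have hle := h.add_le
  have hxd := hx.2 _ h.sub_mem
  have hyd := hy.2 _ h.add_mem
  rw [map_sub] at hxd
  rw [map_add] at hyd
  refine ⟨⟨h.sub_mem, fun w hw ↦ (hx.2 w hw).trans ?_⟩,
    ⟨h.add_mem, fun w hw ↦ (hy.2 w hw).trans ?_⟩⟩
  · rw [map_sub]; linarith
  · rw [map_add]; linarith

variable [DecidableEq M] {j : M}

lemma not_isExchange_single_of_minimal_demand (hx : Minimal (· ∈ demand S v c) x)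
    (hy : y ∈ demand S v c') (hj : c' j ≤ c j) : ¬ IsExchange S v x y (Pi.single j 1) := by
  intro h
  have hxj : x - Pi.single j 1 ∈ demand S v c :=
    (h.mem_demand hx.prop hy (by simpa only [cost_single] using hj)).1
  have hlt : x - Pi.single j 1 < x := sub_lt_self x (Pi.single_pos.2 one_pos)
  exact hx.not_prop_of_lt hlt hxj

end Demand

section Exchange

lemma exists_mem_forall_imp_and_le {ι α : Type*} [LinearOrder α] {A : Set ι} (hA : A.Finite)
    (hne : A.Nonempty) (P : ι → Prop) (f : ι → α) :
    ∃ j ∈ A, ∀ l ∈ A, P l → P j ∧ f l ≤ f j := by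
  by_cases hP : (A ∩ {l | P l}).Nonempty
  · obtain ⟨j, ⟨hjA, hj⟩, hmax⟩ :=
      Set.exists_max_image _ f (hA.subset Set.inter_subset_left) hP
    exact ⟨j, hjA, fun l hlA hl ↦ ⟨hj, hmax l ⟨hlA, hl⟩⟩⟩
  · obtain ⟨j, hj⟩ := hne
    exact ⟨j, hj, fun l hlA hl ↦ (hP ⟨l, hlA, hl⟩).elim⟩

variable {M R : Type*} [DecidableEq M] [CommRing R] [LinearOrder R]
  [IsStrictOrderedRing R] {S : Set (M → ℤ)} {v : (M → ℤ) → R} {x y : M → ℤ} {j k l : M}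

/-- The idea is to exchange at `j` between `x` and `x - χ_j + χ_k - χ_l`. Only at `k` can the latter
exceed the former, so the exchange is with the dummy good, and the maximality of `j` gives the first
conclusion, or with `k`, which gives the second. -/
lemma MNatConcaveOn.isExchange_or_isExchange (hv : MNatConcaveOn S v) (hx : x ∈ S) (hjk : j ≠ k)
    (hj : x - (Pi.single j 1 - Pi.single k 1) ∈ S)
    (h : IsExchange S v (x - (Pi.single j 1 - Pi.single k 1)) y (Pi.single l 1))
    (hmax : x - (Pi.single l 1 - Pi.single k 1) ∈ S → y + Pi.single l 1 ∈ S →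
      y + Pi.single j 1 ∈ S ∧
        v (x - (Pi.single l 1 - Pi.single k 1)) + v (y + Pi.single l 1) ≤
          v (x - (Pi.single j 1 - Pi.single k 1)) + v (y + Pi.single j 1)) :
    IsExchange S v x y (Pi.single j 1) ∨ IsExchange S v x y (Pi.single l 1) := by
  set x' := x - (Pi.single j 1 - Pi.single k 1) with hx'
  have hlt : (x' - Pi.single l 1 : M → ℤ) j < x j := by
    simp only [hx', Pi.sub_apply, Pi.single_apply, if_true, if_neg hjk]
    split_ifs <;> omega
  have hle_of_ne (i : M) (hi : i ≠ k) : (x' - Pi.single l 1 : M → ℤ) i ≤ x i := by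
    simp only [hx', Pi.sub_apply, Pi.single_apply, if_neg hi]
    split_ifs <;> omega
  have hle := h.add_le
  rcases hv x hx (x' - Pi.single l 1) h.sub_mem j hlt with hdrop | ⟨k', hk', hswap⟩
  · have hxl : x' - Pi.single l 1 + Pi.single j 1 = x - (Pi.single l 1 - Pi.single k 1) := by
      rw [hx']; abel
    have hdrop_le := hdrop.add_le
    rw [hxl] at hdrop_le
    obtain ⟨hyj, hlj⟩ := hmax (hxl ▸ hdrop.add_mem) h.add_mem
    exact .inl ⟨hdrop.sub_mem, hyj, by linarith⟩
  · obtain rfl : k' = k := by_contra fun hne ↦ (hle_of_ne k' hne).not_gt hk'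
    have hxl : x' - Pi.single l 1 + (Pi.single j 1 - Pi.single k' 1) = x - Pi.single l 1 := by
      rw [hx']; abel
    have hswap_le := hswap.add_le
    rw [hxl] at hswap_le
    exact .inr ⟨hxl ▸ hswap.add_mem, h.add_mem, by linarith⟩

theorem MNatConcaveOn.exists_isExchange_single_of_sum_lt [Fintype M] (hv : MNatConcaveOn S v)
    (hx : x ∈ S) (hy : y ∈ S) (hlt : ∑ i, y i < ∑ i, x i) :
    ∃ l, y l < x l ∧ IsExchange S v x y (Pi.single l 1) := by
  induction h : excess (x - y) using Nat.strong_induction_on generalizing x with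
  | _ n ih =>
    subst h
    obtain ⟨i, -, hi⟩ := exists_lt_of_sum_lt hlt
    rcases hv x hx y hy i hi with h | ⟨k, hk, hik⟩
    · exact ⟨i, hi, h⟩
    obtain ⟨j, ⟨hj, hjS⟩, hmax⟩ := exists_mem_forall_imp_and_le
      (Set.toFinite {j | y j < x j ∧ x - (Pi.single j 1 - Pi.single k 1) ∈ S}) ⟨i, hi, hik.sub_mem⟩
      (fun l ↦ y + Pi.single l 1 ∈ S)
      (fun l ↦ v (x - (Pi.single l 1 - Pi.single k 1)) + v (y + Pi.single l 1))
    have hjk : j ≠ k := by rintro rfl; exact lt_asymm hj hk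
    have hcloser : excess (x - (Pi.single j 1 - Pi.single k 1) - y) < excess (x - y) := by
      rw [sub_right_comm]
      exact excess_sub_lt (sub_pos.2 hj) (sub_neg.2 hk)
    obtain ⟨l, hl, hxl⟩ := ih _ hcloser hjS (by rwa [sum_sub_single_sub_single]) rfl
    have hlx : y l < x l := by
      simp only [Pi.sub_apply, Pi.single_apply] at hl
      split_ifs at hl <;> subst_vars <;> omega
    exact (hv.isExchange_or_isExchange hx hjk hjS hxl fun hlS ↦ hmax l ⟨hlx, hlS⟩).elim
      (fun h ↦ ⟨j, hj, h⟩) (fun h ↦ ⟨l, hlx, h⟩)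

end Exchange

section GrossSubstitutes

variable {M R : Type*} [Fintype M] [DecidableEq M] [CommRing R] [LinearOrder R]
  [IsStrictOrderedRing R] {S : Set (M → ℤ)} {v : (M → ℤ) → R} {c c' : M → R} {x y : M → ℤ}

theorem MNatConcaveOn.sum_le_sum_of_minimal_demand (hv : MNatConcaveOn S v) (hcc' : c ≤ c')
    (hx : x ∈ demand S v c) (hy : Minimal (· ∈ demand S v c') y) : ∑ i, y i ≤ ∑ i, x i := by
  by_contra! hlt
  obtain ⟨k, -, hk⟩ := hv.exists_isExchange_single_of_sum_lt hy.prop.1 hx.1 hlt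
  exact not_isExchange_single_of_minimal_demand hy hx (hcc' k) hk

lemma MNatConcaveOn.minimal_demand_of_sum_eq (hv : MNatConcaveOn S v)
    (hx : Minimal (· ∈ demand S v c) x) (hy : y ∈ demand S v c) (hyx : ∑ i, y i = ∑ i, x i) :
    Minimal (· ∈ demand S v c) y := by
  refine minimal_iff.2 ⟨hy, fun w hw hwy ↦ ?_⟩
  have hyw : ∑ i, y i ≤ ∑ i, w i := hyx ▸ hv.sum_le_sum_of_minimal_demand le_rfl hw hx
  by_contra hne
  exact hyw.not_gt (Fintype.sum_strictMono (hwy.lt_of_ne' hne))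

lemma MNatConcaveOn.exists_minimal_demand_excess_lt (hv : MNatConcaveOn S v) (hcc' : c ≤ c')
    (hx : Minimal (· ∈ demand S v c) x) (hy : Minimal (· ∈ demand S v c') y) {j : M}
    (hj : c j = c' j) (hlt : y j < x j) :
    ∃ z, Minimal (· ∈ demand S v c') z ∧ excess (x - z) < excess (x - y) := by
  rcases hv x hx.prop.1 y hy.prop.1 j hlt with h | ⟨k, hk, h⟩
  · exact (not_isExchange_single_of_minimal_demand hx hy.prop hj.ge h).elim
  have hcost : cost c' (Pi.single j 1 - Pi.single k 1) ≤
      cost c (Pi.single j 1 - Pi.single k 1) := by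
    simpa only [map_sub, cost_single, hj] using sub_le_sub_left (hcc' k) _
  refine ⟨y + (Pi.single j 1 - Pi.single k 1), hv.minimal_demand_of_sum_eq hy
    (h.mem_demand hx.prop hy.prop hcost).2 (sum_add_single_sub_single y j k), ?_⟩
  rw [← sub_sub]
  exact excess_sub_lt (sub_pos.2 hlt) (sub_neg.2 hk)

theorem stmt4_general (hv : MNatConcaveOn S v) (hcc' : c ≤ c')
    (hne : ∃ y, Minimal (· ∈ demand S v c') y) (hx : Minimal (· ∈ demand S v c) x) :
    ∃ x', Minimal (· ∈ demand S v c') x' ∧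
      (∀ j, c j = c' j → x j ≤ x' j) ∧ ∑ j, x' j ≤ ∑ j, x j := by
  obtain ⟨x', hx', hclosest⟩ : ∃ x', MinimalFor (Minimal (· ∈ demand S v c'))
      (fun y ↦ excess (x - y)) x' := exists_minimalFor_of_wellFoundedLT _ _ hne
  refine ⟨x', hx', fun j hj ↦ ?_, hv.sum_le_sum_of_minimal_demand hcc' hx.prop hx'⟩
  by_contra! hlt
  obtain ⟨z, hz, hzlt⟩ := hv.exists_minimal_demand_excess_lt hcc' hx hx' hj hlt
  exact hzlt.not_ge (hclosest hz hzlt.le)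

end GrossSubstitutes

/-- GS&LAD condition for minimal demand bundles: for `p ≤ p'` and any minimal
demanded bundle `x` at `p`, there is a minimal demanded bundle `x'` at `p'` with
`x_j ≤ x'_j` on goods with unchanged price and `x(M) ≥ x'(M)`. -/
theorem stmt4 {M : Type*} [Fintype M] [DecidableEq M]
    (s : M → ℤ) (hs : ∀ j, 0 ≤ s j)
    (v : (M → ℤ) → ℝ)
    (box : Set (M → ℤ)) (hbox : box = {x | ∀ j, 0 ≤ x j ∧ x j ≤ s j})
    (hvnonneg : ∀ x ∈ box, 0 ≤ v x)
    -- M♮-concavity of `v` on the box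
    (hMconc : ∀ x ∈ box, ∀ x' ∈ box, ∀ j, x' j < x j →
      (v x + v x' ≤ v (x - Pi.single j 1) + v (x' + Pi.single j 1)) ∨
      (∃ k, x k < x' k ∧
        v x + v x' ≤ v (x - Pi.single j 1 + Pi.single k 1)
                    + v (x' + Pi.single j 1 - Pi.single k 1)))
    (q : M → ℝ → ℝ)
    (hqmono : ∀ j, StrictMono (q j)) (hqcont : ∀ j, Continuous (q j))
    (hqnonneg : ∀ j r, 0 ≤ r → 0 ≤ q j r)
    (p p' : M → ℝ) (hp : ∀ j, 0 ≤ p j) (hpp' : ∀ j, p j ≤ p' j)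
    (D : (M → ℝ) → Set (M → ℤ))
    (hD : ∀ r, D r = {x ∈ box | ∀ y ∈ box,
        v y - ∑ j, q j (r j) * (y j : ℝ) ≤ v x - ∑ j, q j (r j) * (x j : ℝ)})
    (Dmin : (M → ℝ) → Set (M → ℤ))
    (hDmin : ∀ r, Dmin r = {x ∈ D r | ∀ y ∈ D r, y ≤ x → y = x})
    (x : M → ℤ) (hx : x ∈ Dmin p) :
    ∃ x' ∈ Dmin p', (∀ j, p j = p' j → x j ≤ x' j) ∧ ∑ j, x' j ≤ ∑ j, x j := by
  simp only [forall_and] at hbox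
  obtain rfl : box = Set.Icc 0 s := hbox
  obtain rfl : D = fun r ↦ demand (Set.Icc 0 s) v fun j ↦ q j (r j) := funext hD
  obtain rfl : Dmin = fun r ↦ {y | Minimal (· ∈ demand (Set.Icc 0 s) v fun j ↦ q j (r j)) y} := by
    ext r y
    simp only [hDmin, Set.mem_ofPred_eq, minimal_iff, eq_comm]
  obtain ⟨x', hx', hxx', hsum⟩ := stmt4_general (mNatConcaveOn_Icc hMconc)
    (fun j ↦ (hqmono j).monotone (hpp' j))
    (exists_minimal_mem_demand (Set.finite_Icc 0 s) (Set.nonempty_Icc.2 hs) v _) hx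
  exact ⟨x', hx', fun j hj ↦ hxx' j (congrArg (q j) hj), hsum⟩
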